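/- arXiv:1906.07957 — 6 statements merged into one kernel-verified Lean document; each statement's English description precedes it below -/
import Mathlib

section
/- Let t ∈ {1,…,T}, j ∈ S, and let n ∈ S^(t) satisfy n_ℓ ≠ 1 for every ℓ ∈ S_AR. Then the forward quantity satisfies the recursion α^(t)_n(j) = f_t(j, n) · Σ_{i ∈ S_AR^c} p_{ij} · α^(t−1)_{n−1}(i), where n − 1 denotes the vector n minus the all-ones vector. -/
open Finset

namespace MRS

/-- Time since the last visit to the regime with value `j` strictly before time `t`;
equals `t + 1` if that regime was never visited before time `t`. -/
def counter {M : ℕ} (r : ℕ → Fin M) (t : ℕ) (j : ℕ) : ℕ :=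
  if h : ((Finset.range t).filter fun τ => (r τ : ℕ) = j).Nonempty then
    t - ((Finset.range t).filter fun τ => (r τ : ℕ) = j).max' h
  else t + 1

/-- Counter vector for the `k` AR(1) regimes (the regimes with values `0, …, k-1`). -/
def nvec {M : ℕ} (k : ℕ) (r : ℕ → Fin M) (t : ℕ) : Fin k → ℕ :=
  fun j => counter r t (j : ℕ)

/-- Extend a finite path to a stream (values beyond the end repeat the last value;
they are never used for counters up to time `t`). -/
def pad {M t : ℕ} (r : Fin (t + 1) → Fin M) : ℕ → Fin M :=
  fun s => r ⟨min s t, Nat.lt_succ_of_le (min_le_right s t)⟩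

/-- The set `S^(t)` of possible counter vectors at time `t`: every entry lies in
`{1, …, t+1}`, at most `min t k` entries differ from `t+1`, and the entries different
from `t+1` are pairwise distinct. -/
def Sset (k t : ℕ) : Finset (Fin k → ℕ) :=
  (Fintype.piFinset fun _ : Fin k => Finset.Icc 1 (t + 1)).filter fun n =>
    (Finset.univ.filter fun j => n j ≠ t + 1).card ≤ min t k ∧
      ∀ i j : Fin k, i ≠ j → n i ≠ t + 1 → n j ≠ t + 1 → n i ≠ n j

/-- Weight of a (partial) path `r = (r_0, …, r_t)`:
`π_{r_0} f_0(r_0) ∏_{s=1}^t p_{r_{s-1} r_s} f_s(r_s, n_s(r))`. -/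
noncomputable def wpath {M : ℕ} (k : ℕ) (pi0 : Fin M → ℝ) (p : Fin M → Fin M → ℝ)
    (f0 : Fin M → ℝ) (f : ℕ → Fin M → (Fin k → ℕ) → ℝ) {t : ℕ}
    (r : Fin (t + 1) → Fin M) : ℝ :=
  pi0 (r 0) * f0 (r 0) *
    ∏ s ∈ Finset.Icc 1 t, p (pad r (s - 1)) (pad r s) * f s (pad r s) (nvec k (pad r) s)

/-- Forward quantity `α^(t)_n(j)`: total weight of partial paths ending in regime `j`
at time `t` with counter vector `n`. -/
noncomputable def alpha {M : ℕ} (k : ℕ) (pi0 : Fin M → ℝ) (p : Fin M → Fin M → ℝ)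
    (f0 : Fin M → ℝ) (f : ℕ → Fin M → (Fin k → ℕ) → ℝ)
    (t : ℕ) (n : Fin k → ℕ) (j : Fin M) : ℝ :=
  ∑ r ∈ Finset.univ.filter
      (fun r : Fin (t + 1) → Fin M => r (Fin.last t) = j ∧ nvec k (pad r) t = n),
    wpath k pi0 p f0 f r

end MRS

namespace MRS

theorem counter_congr {M : ℕ} (r r' : ℕ → Fin M) (t : ℕ) (h : ∀ s < t, r s = r' s) (j : ℕ) :
    counter r t j = counter r' t j := by
  have : ((Finset.range t).filter fun τ => (r τ : ℕ) = j)
      = ((Finset.range t).filter fun τ => (r' τ : ℕ) = j) := by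
    apply Finset.filter_congr
    intro x hx
    rw [h x (Finset.mem_range.1 hx)]
  unfold counter
  simp only [this]

theorem counter_succ {M : ℕ} (r : ℕ → Fin M) (t j : ℕ) :
    counter r (t + 1) j = if (r t : ℕ) = j then 1 else counter r t j + 1 := by
  split_ifs with h
  · have hmem : t ∈ ((Finset.range (t+1)).filter fun τ => (r τ : ℕ) = j) := by simp [h]
    have hne : ((Finset.range (t+1)).filter fun τ => (r τ : ℕ) = j).Nonempty := ⟨t, hmem⟩
    unfold counter
    rw [dif_pos hne]
    have h1 := Finset.le_max' _ t hmem
    have h2 := Finset.max'_mem _ hne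
    rw [Finset.mem_filter, Finset.mem_range] at h2
    omega
  · have : ((Finset.range (t+1)).filter fun τ => (r τ : ℕ) = j)
      = ((Finset.range t).filter fun τ => (r τ : ℕ) = j) := by
      rw [Finset.range_add_one, Finset.filter_insert, if_neg h]
    unfold counter
    simp only [this]
    split_ifs with hne
    · have h2 := Finset.max'_mem _ hne
      rw [Finset.mem_filter, Finset.mem_range] at h2
      omega
    · rfl

theorem pad_snoc {M u : ℕ} (r : Fin (u + 1) → Fin M) (j : Fin M) (s : ℕ) (hs : s ≤ u) :
    pad (Fin.snoc r j : Fin (u + 1 + 1) → Fin M) s = pad r s := by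
  unfold pad
  have : (⟨min s (u+1), Nat.lt_succ_of_le (min_le_right s (u+1))⟩ : Fin (u+1+1))
      = Fin.castSucc ⟨min s u, Nat.lt_succ_of_le (min_le_right s u)⟩ := by
    ext; simp; omega
  rw [this, Fin.snoc_castSucc (α := fun _ => Fin M)]

theorem pad_last {M u : ℕ} (r : Fin (u + 1) → Fin M) : pad r u = r (Fin.last u) := by
  unfold pad
  congr 1
  ext; simp

theorem nvec_snoc {M u : ℕ} (k : ℕ) (r : Fin (u + 1) → Fin M) (j : Fin M) (s : ℕ)
    (hs : s ≤ u + 1) :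
    nvec k (pad (Fin.snoc r j : Fin (u + 1 + 1) → Fin M)) s = nvec k (pad r) s := by
  funext l
  exact counter_congr _ _ _ (fun x hx => pad_snoc r j x (by omega)) _

theorem wpath_snoc {M : ℕ} (k : ℕ) (pi0 : Fin M → ℝ) (p : Fin M → Fin M → ℝ)
    (f0 : Fin M → ℝ) (f : ℕ → Fin M → (Fin k → ℕ) → ℝ) {u : ℕ}
    (r : Fin (u + 1) → Fin M) (j : Fin M) :
    wpath k pi0 p f0 f (Fin.snoc r j : Fin (u + 1 + 1) → Fin M)
      = wpath k pi0 p f0 f r * (p (r (Fin.last u)) j * f (u + 1) j (nvec k (pad r) (u + 1))) := by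
  unfold wpath
  have h0 : (Fin.snoc r j : Fin (u + 1 + 1) → Fin M) 0 = r 0 := by
    have := Fin.snoc_castSucc (α := fun _ => Fin M) j r 0
    simpa using this
  rw [Finset.prod_Icc_succ_top (by omega), h0, ← mul_assoc]
  congr 1
  · congr 1
    apply Finset.prod_congr rfl
    intro s hs
    rw [Finset.mem_Icc] at hs
    rw [pad_snoc _ _ _ (by omega), pad_snoc _ _ _ hs.2, nvec_snoc _ _ _ _ (by omega)]
  · rw [nvec_snoc _ _ _ _ le_rfl, pad_last, Fin.snoc_last (α := fun _ => Fin M),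
      Nat.add_sub_cancel, pad_snoc _ _ _ le_rfl, pad_last]

theorem nvec_iff {M : ℕ} (k : ℕ) (r : ℕ → Fin M) (u : ℕ) (n : Fin k → ℕ)
    (h0 : ∀ l, 1 ≤ n l) (hn1 : ∀ l, n l ≠ 1) :
    nvec k r (u + 1) = n ↔ k ≤ (r u : ℕ) ∧ nvec k r u = fun l => n l - 1 := by
  constructor
  · intro h
    have hk : k ≤ (r u : ℕ) := by
      by_contra hlt
      push Not at hlt
      apply hn1 ⟨r u, hlt⟩
      rw [← h]
      simp [nvec, counter_succ]
    refine ⟨hk, ?_⟩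
    funext l
    rw [← h]
    have : (r u : ℕ) ≠ l := by omega
    simp [nvec, counter_succ, this]
  · rintro ⟨hk, h⟩
    funext l
    have h2 := congrFun h l
    have : (r u : ℕ) ≠ l := by omega
    have := h0 l
    simp only [nvec] at h2 ⊢
    rw [counter_succ, if_neg ‹_›, h2]
    omega

end MRS

open MRS in
/-- Forward recursion when no counter equals `1`:
`α^(t)_n(j) = f_t(j,n) · ∑_{i ∈ S_AR^c} p_{ij} · α^(t-1)_{n-1}(i)`. -/
theorem forward_recursion_no_reset (M k T : ℕ) (hM : 2 ≤ M) (hk : 1 ≤ k) (hkM : k < M)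
    (hT : 1 ≤ T)
    (pi0 : Fin M → ℝ) (p : Fin M → Fin M → ℝ) (f0 : Fin M → ℝ)
    (f : ℕ → Fin M → (Fin k → ℕ) → ℝ)
    (hpi : ∀ i, 0 ≤ pi0 i) (hpisum : ∑ i, pi0 i = 1)
    (hp : ∀ i j, 0 ≤ p i j) (hprow : ∀ i, ∑ j, p i j = 1)
    (hf0 : ∀ i, 0 ≤ f0 i) (hf : ∀ t j n, 0 ≤ f t j n)
    (t : ℕ) (ht1 : 1 ≤ t) (htT : t ≤ T) (j : Fin M)
    (n : Fin k → ℕ) (hn : n ∈ Sset k t) (hn1 : ∀ ℓ : Fin k, n ℓ ≠ 1) :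
    alpha k pi0 p f0 f t n j
      = f t j n *
          ∑ i ∈ Finset.univ.filter (fun i : Fin M => k ≤ (i : ℕ)),
            p i j * alpha k pi0 p f0 f (t - 1) (fun ℓ => n ℓ - 1) i := by
  obtain ⟨u, rfl⟩ : ∃ u, t = u + 1 := ⟨t - 1, by omega⟩
  have h0 : ∀ l, 1 ≤ n l := by
    intro l
    have h := (Finset.mem_filter.1 hn).1
    rw [Fintype.mem_piFinset] at h
    exact (Finset.mem_Icc.1 (h l)).1
  rw [Nat.add_sub_cancel]
  have hR : ∑ i ∈ Finset.univ.filter (fun i : Fin M => k ≤ (i : ℕ)),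
      p i j * alpha k pi0 p f0 f u (fun ℓ => n ℓ - 1) i
      = ∑ r ∈ Finset.univ.filter (fun r : Fin (u + 1) → Fin M =>
          k ≤ (r (Fin.last u) : ℕ) ∧ nvec k (pad r) u = fun ℓ => n ℓ - 1),
          p (r (Fin.last u)) j * wpath k pi0 p f0 f r := by
    rw [← Finset.sum_fiberwise_of_maps_to (g := fun r : Fin (u + 1) → Fin M => r (Fin.last u))
      (t := Finset.univ.filter (fun i : Fin M => k ≤ (i : ℕ)))]
    · apply Finset.sum_congr rfl
      intro i hi
      have hi' : k ≤ (i : ℕ) := by simpa using hi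
      unfold alpha
      rw [Finset.mul_sum]
      apply Finset.sum_congr
      · ext r
        simp only [Finset.mem_filter, Finset.mem_univ, true_and]
        constructor
        · rintro ⟨rfl, h⟩
          exact ⟨⟨hi', h⟩, rfl⟩
        · rintro ⟨⟨_, h⟩, h'⟩
          exact ⟨h', h⟩
      · intro r hr
        simp only [Finset.mem_filter, Finset.mem_univ, true_and] at hr
        rw [hr.2]
    · intro r hr
      simp only [Finset.mem_filter, Finset.mem_univ, true_and] at hr ⊢
      exact hr.1
  rw [hR, Finset.mul_sum]
  unfold alpha
  symm
  refine Finset.sum_bij' (fun r _ => (Fin.snoc r j : Fin (u + 1 + 1) → Fin M))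
    (fun r _ => (Fin.init r : Fin (u + 1) → Fin M)) ?_ ?_ ?_ ?_ ?_
  · intro r hr
    simp only [Finset.mem_filter, Finset.mem_univ, true_and] at hr ⊢
    refine ⟨Fin.snoc_last (α := fun _ => Fin M) _ _, ?_⟩
    rw [nvec_snoc _ _ _ _ le_rfl, nvec_iff k _ u n h0 hn1, pad_last]
    exact hr
  · intro r hr
    simp only [Finset.mem_filter, Finset.mem_univ, true_and] at hr ⊢
    have e : r = (Fin.snoc (Fin.init r : Fin (u + 1) → Fin M) j : Fin (u + 1 + 1) → Fin M) := by
      rw [← hr.1]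
      exact (Fin.snoc_init_self (α := fun _ => Fin M) r).symm
    have h2 := hr.2
    rw [e, nvec_snoc _ _ _ _ le_rfl, nvec_iff k _ u n h0 hn1, pad_last] at h2
    exact h2
  · intro r hr
    exact Fin.init_snoc (α := fun _ => Fin M) _ _
  · intro r hr
    simp only [Finset.mem_filter, Finset.mem_univ, true_and] at hr
    rw [← hr.1]
    exact Fin.snoc_init_self (α := fun _ => Fin M) r
  · intro r hr
    simp only [Finset.mem_filter, Finset.mem_univ, true_and] at hr
    rw [wpath_snoc, (nvec_iff k _ u n h0 hn1).2 (by rw [pad_last]; exact hr)]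
    ring
end

section
/- The likelihood, i.e. the total weight of all regime sequences, equals the total final forward quantity: Σ_{r ∈ S^{T+1}} w(r) = Σ_{j ∈ S} Σ_{n ∈ S^(T)} α^(T)_n(j). -/
open Finset

theorem MRS.counter_spec {M : ℕ} (r : ℕ → Fin M) (t j : ℕ) :
    MRS.counter r t j = t + 1 ∨
      ∃ τ, τ < t ∧ (r τ : ℕ) = j ∧ MRS.counter r t j = t - τ := by
  unfold MRS.counter
  split_ifs with h
  · right
    have hm := Finset.max'_mem _ h
    rw [Finset.mem_filter, Finset.mem_range] at hm
    exact ⟨_, hm.1, hm.2, rfl⟩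
  · left; rfl

theorem MRS.nvec_mem {M : ℕ} (k : ℕ) (r : ℕ → Fin M) (t : ℕ) :
    MRS.nvec k r t ∈ MRS.Sset k t := by
  have hinj : ∀ i j : Fin k, i ≠ j → MRS.nvec k r t i ≠ t + 1 → MRS.nvec k r t j ≠ t + 1 →
      MRS.nvec k r t i ≠ MRS.nvec k r t j := by
    intro i j hij hi hj he
    simp only [MRS.nvec] at hi hj he
    rcases MRS.counter_spec r t i with h | ⟨a, ha, hra, h⟩
    · exact hi h
    rcases MRS.counter_spec r t j with h' | ⟨b, hb, hrb, h'⟩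
    · exact hj h'
    have hab : a = b := by omega
    subst hab
    exact hij (Fin.ext (hra.symm.trans hrb))
  have hmem : ∀ j : Fin k, 1 ≤ MRS.nvec k r t j ∧ MRS.nvec k r t j ≤ t + 1 := by
    intro j
    simp only [MRS.nvec]
    rcases MRS.counter_spec r t j with h | ⟨a, ha, hra, h⟩ <;> omega
  unfold MRS.Sset
  rw [Finset.mem_filter, Fintype.mem_piFinset]
  refine ⟨fun j => Finset.mem_Icc.2 (hmem j), le_min ?_ ?_, hinj⟩
  · have : (Finset.univ.filter fun j => MRS.nvec k r t j ≠ t + 1).card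
        ≤ (Finset.Icc 1 t).card := by
      apply Finset.card_le_card_of_injOn (MRS.nvec k r t)
      · intro j hj
        have hj' : MRS.nvec k r t j ≠ t + 1 := by simpa using hj
        have := hmem j
        have h2 : MRS.nvec k r t j ∈ Finset.Icc 1 t := by
          rw [Finset.mem_Icc]; omega
        exact_mod_cast h2
      · intro i hi j hj he
        by_contra hij
        exact hinj i j hij (by simpa using hi) (by simpa using hj) he
    simpa using this
  · simpa using Finset.card_le_univ (Finset.univ.filter fun j => MRS.nvec k r t j ≠ t + 1)


open MRS in
/-- The likelihood (total weight of all regime sequences) equals the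
total final forward quantity: `∑_{r ∈ S^{T+1}} w(r) = ∑_{j ∈ S} ∑_{n ∈ S^(T)} α^(T)_n(j)`. -/
theorem likelihood_eq_sum_forward (M k T : ℕ) (hM : 2 ≤ M) (hk : 1 ≤ k) (hkM : k < M)
    (hT : 1 ≤ T)
    (pi0 : Fin M → ℝ) (p : Fin M → Fin M → ℝ) (f0 : Fin M → ℝ)
    (f : ℕ → Fin M → (Fin k → ℕ) → ℝ)
    (hpi : ∀ i, 0 ≤ pi0 i) (hpisum : ∑ i, pi0 i = 1)
    (hp : ∀ i j, 0 ≤ p i j) (hprow : ∀ i, ∑ j, p i j = 1)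
    (hf0 : ∀ i, 0 ≤ f0 i) (hf : ∀ t j n, 0 ≤ f t j n) :
    ∑ r : Fin (T + 1) → Fin M, wpath k pi0 p f0 f r
      = ∑ j : Fin M, ∑ n ∈ Sset k T, alpha k pi0 p f0 f T n j := by
  rw [← Finset.sum_fiberwise (s := Finset.univ)
    (g := fun r : Fin (T + 1) → Fin M => r (Fin.last T))]
  refine Finset.sum_congr rfl fun j _ => ?_
  rw [← Finset.sum_fiberwise_of_maps_to (t := Sset k T)
    (g := fun r : Fin (T + 1) → Fin M => nvec k (pad r) T) (fun r _ => nvec_mem k _ T)]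
  refine Finset.sum_congr rfl fun n _ => ?_
  unfold alpha
  rw [Finset.filter_filter]
end

section
/- For all integers t ≥ 1 and k ≥ 1, Σ_{m=0}^{min(t,k)} C(t,m)·C(k,m)·m! ≤ (k+1)·t^k·k^k / k!, where C(·,·) denotes the binomial coefficient. (This is the bound on |S^(t)| underlying the O(M²T^{k+1}k^k) complexity of the forward algorithm.) -/
theorem choose_mul_factorial_le_aux (k m : ℕ) (h : m ≤ k) :
    k.choose m * k.factorial ≤ k ^ k := by
  have h1 : k.descFactorial m = m.factorial * k.choose m := Nat.descFactorial_eq_factorial_mul_choose k m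
  have h2 : (k - (k - m)).factorial * k.descFactorial (k - m) = k.factorial :=
    Nat.factorial_mul_descFactorial (Nat.sub_le k m)
  rw [Nat.sub_sub_self h] at h2
  calc k.choose m * k.factorial = k.descFactorial m * k.descFactorial (k - m) := by
        rw [h1, ← h2]; ring
    _ ≤ k ^ m * k ^ (k - m) :=
        Nat.mul_le_mul (Nat.descFactorial_le_pow k m) (Nat.descFactorial_le_pow k (k - m))
    _ = k ^ k := by rw [← pow_add, Nat.add_sub_cancel' h]

/-- For all integers `t ≥ 1` and `k ≥ 1`,
`∑_{m=0}^{min(t,k)} C(t,m)·C(k,m)·m! ≤ (k+1)·t^k·k^k / k!`. -/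
theorem card_Sset_bound (t k : ℕ) (ht : 1 ≤ t) (hk : 1 ≤ k) :
    ((∑ m ∈ Finset.range (min t k + 1), t.choose m * k.choose m * m.factorial : ℕ) : ℝ)
      ≤ ((k : ℝ) + 1) * (t : ℝ) ^ k * (k : ℝ) ^ k / (k.factorial : ℝ) := by
  rw [le_div_iff₀ (by exact_mod_cast k.factorial_pos)]
  have key : (∑ m ∈ Finset.range (min t k + 1), t.choose m * k.choose m * m.factorial)
      * k.factorial ≤ (k + 1) * t ^ k * k ^ k := by
    rw [Finset.sum_mul]
    have hb : ∀ m ∈ Finset.range (min t k + 1),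
        t.choose m * k.choose m * m.factorial * k.factorial ≤ t ^ k * k ^ k := by
      intro m hm
      have hmk : m ≤ k := by
        have := Finset.mem_range.1 hm
        omega
      calc t.choose m * k.choose m * m.factorial * k.factorial
          = t.descFactorial m * (k.choose m * k.factorial) := by
            rw [Nat.descFactorial_eq_factorial_mul_choose]; ring
        _ ≤ t ^ k * k ^ k := Nat.mul_le_mul
            ((Nat.descFactorial_le_pow t m).trans (Nat.pow_le_pow_right ht hmk))
            (choose_mul_factorial_le_aux k m hmk)
    refine (Finset.sum_le_card_nsmul _ _ _ hb).trans ?_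
    rw [Finset.card_range, smul_eq_mul, mul_assoc]
    exact Nat.mul_le_mul_right _ (by omega)
  exact_mod_cast key
end

section
/- For all integers T ≥ 2 and k ≥ 1, Σ_{t=0}^{T−1} Σ_{m=0}^{min(t,k)} C(t,m)·C(k,m)·m! ≤ T·(T−1)^k·k^{k−1}·(k+1) / (k−1)!, where C(·,·) denotes the binomial coefficient. (This is the bound Σ_{t=0}^{T−1} |S^(t)| ≤ T(T−1)^k k^{k−1}(k+1)/(k−1)! underlying the O(M²T^{k+1}k^k) complexity of the backward algorithm.) -/
theorem aux_bern (a n : ℕ) : (a + n) * a ^ n ≤ (a + 1) ^ n * a := by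
  induction n with
  | zero => simp
  | succ n ih =>
    calc (a + (n + 1)) * a ^ (n + 1) = ((a + (n + 1)) * a) * a ^ n := by ring
      _ ≤ ((a + n) * (a + 1)) * a ^ n := by gcongr ?_ * _; nlinarith
      _ = (a + 1) * ((a + n) * a ^ n) := by ring
      _ ≤ (a + 1) * ((a + 1) ^ n * a) := by gcongr
      _ = _ := by ring

theorem aux_two (j : ℕ) : 2 ^ (j + 1) * j.factorial ≤ (j + 1) ^ j * (j + 2) := by
  induction j with
  | zero => simp
  | succ j ih =>
    have h := aux_bern (j + 1) (j + 1)
    have h2 : 2 * (j + 1) ^ (j + 1) ≤ (j + 1 + 1) ^ (j + 1) := by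
      apply Nat.le_of_mul_le_mul_right _ (Nat.succ_pos j)
      calc _ = (j + 1 + (j + 1)) * (j + 1) ^ (j + 1) := by rw [Nat.succ_eq_add_one]; ring
        _ ≤ _ := h
    calc 2 ^ (j + 1 + 1) * (j + 1).factorial
        = 2 * (j + 1) * (2 ^ (j + 1) * j.factorial) := by rw [Nat.factorial_succ]; ring
      _ ≤ 2 * (j + 1) * ((j + 1) ^ j * (j + 2)) := by gcongr
      _ = (2 * (j + 1) ^ (j + 1)) * (j + 2) := by ring
      _ ≤ (j + 1 + 1) ^ (j + 1) * (j + 1 + 2) := by gcongr <;> omega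

theorem aux_inner (n t k : ℕ) (hn : 1 ≤ n) (ht : t ≤ n) :
    ∑ m ∈ Finset.range (min t k + 1), t.choose m * k.choose m * m.factorial ≤ n ^ k * 2 ^ k := by
  calc _ ≤ ∑ m ∈ Finset.range (k + 1), t.choose m * k.choose m * m.factorial := by
        apply Finset.sum_le_sum_of_subset
        apply Finset.range_subset_range.2
        omega
    _ ≤ ∑ m ∈ Finset.range (k + 1), n ^ k * k.choose m := by
        apply Finset.sum_le_sum
        intro m hm
        have hm' : m ≤ k := by simpa [Nat.lt_succ_iff] using hm
        calc _ = (m.factorial * t.choose m) * k.choose m := by ring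
          _ = t.descFactorial m * k.choose m := by rw [Nat.descFactorial_eq_factorial_mul_choose]
          _ ≤ n ^ k * k.choose m := by
            gcongr
            exact (Nat.descFactorial_le_pow t m).trans
              ((Nat.pow_le_pow_left ht m).trans (Nat.pow_le_pow_right hn hm'))
    _ = _ := by rw [← Finset.mul_sum, Nat.sum_range_choose]

/-- For all integers `T ≥ 2` and `k ≥ 1`,
`∑_{t=0}^{T-1} ∑_{m=0}^{min(t,k)} C(t,m)·C(k,m)·m! ≤ T·(T−1)^k·k^{k−1}·(k+1)/(k−1)!`. -/
theorem sum_card_Sset_bound (T k : ℕ) (hT : 2 ≤ T) (hk : 1 ≤ k) :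
    ((∑ t ∈ Finset.range T,
        ∑ m ∈ Finset.range (min t k + 1), t.choose m * k.choose m * m.factorial : ℕ) : ℝ)
      ≤ (T : ℝ) * ((T : ℝ) - 1) ^ k * (k : ℝ) ^ (k - 1) * ((k : ℝ) + 1)
          / ((k - 1).factorial : ℝ) := by
  obtain ⟨j, rfl⟩ : ∃ j, k = j + 1 := ⟨k - 1, by omega⟩
  obtain ⟨n, rfl⟩ : ∃ n, T = n + 1 := ⟨T - 1, by omega⟩
  have h1 := Finset.sum_le_card_nsmul (Finset.range (n + 1))
    (fun t => ∑ m ∈ Finset.range (min t (j + 1) + 1),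
      t.choose m * (j + 1).choose m * m.factorial) (n ^ (j + 1) * 2 ^ (j + 1))
    (fun t ht => aux_inner n t (j + 1) (by omega)
      (by have := Finset.mem_range.1 ht; omega))
  rw [Finset.card_range, smul_eq_mul] at h1
  rw [le_div_iff₀ (by positivity)]
  have h2 := (Nat.mul_le_mul_right j.factorial h1).trans
    (show (n + 1) * (n ^ (j + 1) * 2 ^ (j + 1)) * j.factorial
        ≤ (n + 1) * n ^ (j + 1) * (j + 1) ^ j * (j + 1 + 1) by
      calc _ = (n + 1) * n ^ (j + 1) * (2 ^ (j + 1) * j.factorial) := by ring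
        _ ≤ (n + 1) * n ^ (j + 1) * ((j + 1) ^ j * (j + 2)) :=
          Nat.mul_le_mul_left _ (aux_two j)
        _ = _ := by ring)
  have e : ((n + 1 : ℕ) : ℝ) - 1 = (n : ℝ) := by push_cast; ring
  rw [e, Nat.add_sub_cancel]
  exact_mod_cast h2
end

section
/- Fix φ ∈ (−1,1) and v > 0. Let I be a finite index set and for each i ∈ I let w_i ≥ 0 be a weight, m_i ≥ 1 an integer lag, and y_i, z_i ∈ ℝ (in the MRS model, y_i = x_t is the current observation, z_i = x_{t−m} the last observation from the AR(1) regime, and w_i = P(R_t = j, N_{t,j} = m | x_{0:T}) a smoothed probability). Define s(m) = (1 − φ^m)/(1 − φ) and r(m) = (1 − φ^{2m})/(1 − φ²), and the weighted AR(1) objective F(α) = −Σ_{i ∈ I} w_i·(y_i − s(m_i)·α − φ^{m_i}·z_i)² / (2·v·r(m_i)). If Σ_{i ∈ I} w_i·A_i > 0, where A_i = s(m_i)·(1+φ)/(1+φ^{m_i}), then the unique global maximiser of F over α ∈ ℝ is α* = (Σ_{i ∈ I} w_i·B_i) / (Σ_{i ∈ I} w_i·A_i), where B_i = (y_i − φ^{m_i}·z_i)·(1+φ)/(1+φ^{m_i}).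 (This is the M-step update for the level parameter α of an AR(1) regime, given φ.) -/
/-- M-step update for the level parameter `α` of an AR(1) regime,
given `φ ∈ (-1,1)` and `v > 0`: with `s(m) = (1-φ^m)/(1-φ)`, `r(m) = (1-φ^{2m})/(1-φ²)`,
`A_i = s(m_i)(1+φ)/(1+φ^{m_i})` and `B_i = (y_i - φ^{m_i} z_i)(1+φ)/(1+φ^{m_i})`, if
`∑ w_i A_i > 0` then `α* = (∑ w_i B_i)/(∑ w_i A_i)` is the unique global maximiser of
`F(α) = -∑ w_i (y_i - s(m_i)α - φ^{m_i} z_i)² / (2 v r(m_i))`. -/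
theorem ar1_level_Mstep (φ : ℝ) (hφ₁ : -1 < φ) (hφ₂ : φ < 1) (v : ℝ) (hv : 0 < v)
    (ι : Type) [Fintype ι] (w : ι → ℝ) (hw : ∀ i, 0 ≤ w i)
    (m : ι → ℕ) (hm : ∀ i, 1 ≤ m i) (y z : ι → ℝ)
    (hA : 0 < ∑ i, w i * ((1 - φ ^ m i) / (1 - φ) * ((1 + φ) / (1 + φ ^ m i))))
    (αstar : ℝ)
    (hα : αstar
      = (∑ i, w i * ((y i - φ ^ m i * z i) * ((1 + φ) / (1 + φ ^ m i)))) /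
          ∑ i, w i * ((1 - φ ^ m i) / (1 - φ) * ((1 + φ) / (1 + φ ^ m i)))) :
    ∀ α : ℝ, α ≠ αstar →
      (-∑ i, w i * (y i - (1 - φ ^ m i) / (1 - φ) * α - φ ^ m i * z i) ^ 2 /
          (2 * v * ((1 - φ ^ (2 * m i)) / (1 - φ ^ 2))))
        < -∑ i, w i * (y i - (1 - φ ^ m i) / (1 - φ) * αstar - φ ^ m i * z i) ^ 2 /
            (2 * v * ((1 - φ ^ (2 * m i)) / (1 - φ ^ 2))) := by
  intro α hne
  set SA := ∑ i, w i * ((1 - φ ^ m i) / (1 - φ) * ((1 + φ) / (1 + φ ^ m i))) with hSA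
  set SB := ∑ i, w i * ((y i - φ ^ m i * z i) * ((1 + φ) / (1 + φ ^ m i))) with hSB
  have hB : SB = αstar * SA := by
    rw [hα]; field_simp
  have key : (∑ i, w i * (y i - (1 - φ ^ m i) / (1 - φ) * α - φ ^ m i * z i) ^ 2 /
          (2 * v * ((1 - φ ^ (2 * m i)) / (1 - φ ^ 2))))
        - ∑ i, w i * (y i - (1 - φ ^ m i) / (1 - φ) * αstar - φ ^ m i * z i) ^ 2 /
            (2 * v * ((1 - φ ^ (2 * m i)) / (1 - φ ^ 2)))
        = (α ^ 2 - αstar ^ 2) / (2 * v) * SA - (α - αstar) / v * SB := by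
    rw [hSA, hSB, Finset.mul_sum, Finset.mul_sum, ← Finset.sum_sub_distrib,
      ← Finset.sum_sub_distrib]
    refine Finset.sum_congr rfl fun i _ => ?_
    have habs : |φ ^ m i| < 1 := by
      rw [abs_pow]
      exact pow_lt_one₀ (abs_nonneg _) (abs_lt.mpr ⟨hφ₁, hφ₂⟩) (by have := hm i; omega)
    obtain ⟨h1, h2⟩ := abs_lt.mp habs
    have e : φ ^ (2 * m i) = (φ ^ m i) ^ 2 := by rw [mul_comm, pow_mul]
    rw [e]
    generalize φ ^ m i = p at h1 h2
    have a1 : 1 - φ ≠ 0 := by linarith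
    have a2 : 1 + φ ≠ 0 := by linarith
    have a3 : 1 - p ≠ 0 := by linarith
    have a4 : 1 + p ≠ 0 := by linarith
    have hr : 2 * v * ((1 - p ^ 2) / (1 - φ ^ 2))
        = 2 * v * ((1 - p) * (1 + p) / ((1 - φ) * (1 + φ))) := by ring_nf
    rw [hr]
    field_simp
    ring
  have hpos : 0 < (α ^ 2 - αstar ^ 2) / (2 * v) * SA - (α - αstar) / v * SB := by
    have : (α ^ 2 - αstar ^ 2) / (2 * v) * SA - (α - αstar) / v * SB
        = (α - αstar) ^ 2 * SA / (2 * v) := by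
      rw [hB]; field_simp; ring
    rw [this]
    have : α - αstar ≠ 0 := sub_ne_zero.mpr hne
    positivity
  linarith
end

section
/- Fix φ ∈ (−1,1) and α ∈ ℝ. Let I be a finite index set and for each i ∈ I let w_i ≥ 0 be a weight with Σ_{i ∈ I} w_i > 0, m_i ≥ 1 an integer lag, and y_i, z_i ∈ ℝ. Define s(m) = (1 − φ^m)/(1 − φ), r(m) = (1 − φ^{2m})/(1 − φ²), C_i = (y_i − s(m_i)·α − φ^{m_i}·z_i)² / r(m_i), and the weighted AR(1) objective G(v) = Σ_{i ∈ I} w_i·(−(1/2)·log(2π·v·r(m_i)) − (y_i − s(m_i)·α − φ^{m_i}·z_i)²/(2·v·r(m_i))) for v > 0. Set v* = (Σ_{i ∈ I} w_i·C_i)/(Σ_{i ∈ I} w_i). If v* > 0, then G(v) ≤ G(v*) for all v > 0; i.e., v* is a global maximiser of G on (0,∞). (This is the M-step update for the innovation variance σ² of an AR(1) regime, given φ and α.) -/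
lemma ar1_aux {ι : Type} [Fintype ι] (w r e : ι → ℝ) (hwsum : 0 < ∑ i, w i)
    (hr : ∀ i, 0 < r i) (u : ℝ) (hu : u = (∑ i, w i * (e i / r i)) / ∑ i, w i)
    (hpos : 0 < u) (v : ℝ) (hv : 0 < v) :
    (∑ i, w i * (-(1 / 2) * Real.log (2 * Real.pi * (v * r i)) - e i / (2 * v * r i)))
      ≤ ∑ i, w i * (-(1 / 2) * Real.log (2 * Real.pi * (u * r i)) - e i / (2 * u * r i)) := by
  have hS : (∑ i, w i * (e i / r i)) = u * ∑ i, w i := by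
    rw [hu]; field_simp
  have key : ∀ t : ℝ, 0 < t →
      (∑ i, w i * (-(1 / 2) * Real.log (2 * Real.pi * (t * r i)) - e i / (2 * t * r i)))
      = (∑ i, w i * (-(1 / 2) * Real.log (2 * Real.pi * r i)))
        - (1 / 2) * (∑ i, w i) * (Real.log t + u / t) := by
    intro t ht
    have h1 : (1 / 2) * (∑ i, w i) * (Real.log t + u / t)
        = (∑ i, w i) * (1 / 2 * Real.log t) + (∑ i, w i * (e i / r i)) * (1 / (2 * t)) := by
      rw [hS]; field_simp
    rw [h1, Finset.sum_mul, Finset.sum_mul, ← Finset.sum_add_distrib, ← Finset.sum_sub_distrib]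
    refine Finset.sum_congr rfl fun i _ => ?_
    have hri := hr i
    have hp := Real.pi_pos
    have h2 : 2 * Real.pi * (t * r i) = t * (2 * Real.pi * r i) := by ring
    rw [h2, Real.log_mul ht.ne' (by positivity)]
    field_simp
    ring
  rw [key v hv, key u hpos]
  have h := Real.log_le_sub_one_of_pos (div_pos hpos hv)
  rw [Real.log_div hpos.ne' hv.ne'] at h
  have h3 : Real.log u + u / u ≤ Real.log v + u / v := by
    rw [div_self hpos.ne']; linarith
  have := mul_le_mul_of_nonneg_left h3 (by positivity : 0 ≤ (1 / 2) * (∑ i, w i))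
  linarith

/-- M-step update for the innovation variance of an AR(1) regime,
given `φ ∈ (-1,1)` and `α`: with `s(m) = (1-φ^m)/(1-φ)`, `r(m) = (1-φ^{2m})/(1-φ²)` and
`C_i = (y_i - s(m_i)α - φ^{m_i} z_i)² / r(m_i)`, the value `v* = (∑ w_i C_i)/(∑ w_i)`,
if positive, globally maximises
`G(v) = ∑ w_i (-(1/2) log(2π v r(m_i)) - (y_i - s(m_i)α - φ^{m_i} z_i)²/(2 v r(m_i)))`
over `v > 0`. -/
theorem ar1_variance_Mstep (φ α : ℝ) (hφ₁ : -1 < φ) (hφ₂ : φ < 1)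
    (ι : Type) [Fintype ι] (w : ι → ℝ) (hw : ∀ i, 0 ≤ w i) (hwsum : 0 < ∑ i, w i)
    (m : ι → ℕ) (hm : ∀ i, 1 ≤ m i) (y z : ι → ℝ)
    (vstar : ℝ)
    (hvstar : vstar
      = (∑ i, w i * ((y i - (1 - φ ^ m i) / (1 - φ) * α - φ ^ m i * z i) ^ 2 /
            ((1 - φ ^ (2 * m i)) / (1 - φ ^ 2)))) / ∑ i, w i)
    (hpos : 0 < vstar) :
    ∀ v : ℝ, 0 < v →
      (∑ i, w i *
          (-(1 / 2) * Real.log (2 * Real.pi * (v * ((1 - φ ^ (2 * m i)) / (1 - φ ^ 2))))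
            - (y i - (1 - φ ^ m i) / (1 - φ) * α - φ ^ m i * z i) ^ 2 /
                (2 * v * ((1 - φ ^ (2 * m i)) / (1 - φ ^ 2)))))
        ≤ ∑ i, w i *
            (-(1 / 2) *
                Real.log (2 * Real.pi * (vstar * ((1 - φ ^ (2 * m i)) / (1 - φ ^ 2))))
              - (y i - (1 - φ ^ m i) / (1 - φ) * α - φ ^ m i * z i) ^ 2 /
                  (2 * vstar * ((1 - φ ^ (2 * m i)) / (1 - φ ^ 2)))) := by
  intro v hv
  have hsq : φ ^ 2 < 1 := by nlinarith
  refine ar1_aux w (fun i => (1 - φ ^ (2 * m i)) / (1 - φ ^ 2))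
    (fun i => (y i - (1 - φ ^ m i) / (1 - φ) * α - φ ^ m i * z i) ^ 2) hwsum ?_
    vstar hvstar hpos v hv
  intro i
  have h1 : φ ^ (2 * m i) < 1 := by
    rw [pow_mul]
    exact pow_lt_one₀ (sq_nonneg φ) hsq (by have := hm i; omega)
  exact div_pos (by linarith) (by linarith)
end
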